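/- arXiv:1902.09128 — 3 statements merged into one kernel-verified Lean document; each statement's English description precedes it below -/
import Mathlib

section
/- Let a, b ∈ ℝⁿ with a ≤ b componentwise, let ξ̂ ∈ [a,b] (componentwise), let v ∈ ℝⁿ, t ∈ ℝ and λ ≥ 0. Then the supremum over ξ ∈ [a,b] of ⟨ξ,v⟩ − t − λ‖ξ − ξ̂‖_p equals the minimum, over all γ, η ∈ ℝⁿ with γ ≥ 0, η ≥ 0 and ‖v + γ − η‖_q ≤ λ, of ⟨v + γ − η, ξ̂⟩ − ⟨γ,a⟩ + ⟨η,b⟩ − t; moreover this minimum is attained. -/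
open MeasureTheory Filter Topology
open scoped ENNReal BigOperators

/-- The ℓp norm on ℝⁿ, for `p ∈ [1,∞]` (an extended nonnegative real). -/
noncomputable def lpNorm {n : ℕ} (p : ℝ≥0∞) (x : Fin n → ℝ) : ℝ :=
  if p = ∞ then ⨆ i, |x i| else (∑ i, |x i| ^ p.toReal) ^ (1 / p.toReal)

/-- The Euclidean inner product on ℝⁿ. -/
def ip {n : ℕ} (w x : Fin n → ℝ) : ℝ := ∑ i, w i * x i


theorem aux_tri {p q : ℝ≥0∞} (hpq : 1 / p + 1 / q = 1) :
    1 ≤ q ∧ ((p = 1 ∧ q = ∞) ∨ (p = ∞ ∧ q = 1) ∨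
      (p ≠ ∞ ∧ q ≠ ∞ ∧ p.toReal.HolderConjugate q.toReal)) := by
  have h : ENNReal.HolderConjugate p q := ⟨by simpa using hpq⟩
  refine ⟨?_, ?_⟩
  · have : q⁻¹ ≤ 1 := by
      rw [← hpq]; simp
    simpa using this
  by_cases h1 : q = ∞
  · subst h1
    left
    simpa using hpq
  by_cases h2 : p = ∞
  · subst h2
    right; left
    simpa using hpq
  · right; right
    exact ⟨h2, h1, ENNReal.HolderConjugate.toReal_of_ne_top h2 h1⟩

theorem aux_norm {n : ℕ} {p : ℝ≥0∞} (hp : 1 ≤ p) (x : Fin n → ℝ) :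
    lpNorm p x = ‖(WithLp.toLp p x : PiLp p (fun _ : Fin n => ℝ))‖ := by
  unfold _root_.lpNorm
  split_ifs with h
  · subst h
    rw [PiLp.norm_eq_ciSup]; rfl
  · rw [PiLp.norm_eq_sum (ENNReal.toReal_pos (by positivity) h)]; rfl

theorem aux_le_sup {n : ℕ} (x : Fin n → ℝ) (i : Fin n) : |x i| ≤ ⨆ i, |x i| :=
  le_ciSup (f := fun i => |x i|) (Set.finite_range _).bddAbove i

theorem aux_holder1 {n : ℕ} (x w : Fin n → ℝ) :
    ∑ i, x i * w i ≤ (∑ i, |x i|) * ⨆ i, |w i| := by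
  rw [Finset.sum_mul]
  refine Finset.sum_le_sum fun i _ => ?_
  calc x i * w i ≤ |x i * w i| := le_abs_self _
    _ = |x i| * |w i| := abs_mul _ _
    _ ≤ _ := by gcongr; exact aux_le_sup w i

theorem aux_holder {n : ℕ} {p q : ℝ≥0∞} (hpq : 1 / p + 1 / q = 1) (x w : Fin n → ℝ) :
    ip x w ≤ lpNorm p x * lpNorm q w := by
  unfold ip
  rcases (aux_tri hpq).2 with ⟨rfl, rfl⟩ | ⟨rfl, rfl⟩ | ⟨h1, h2, h⟩
  · simpa [_root_.lpNorm] using aux_holder1 x w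
  · have := aux_holder1 w x
    simp only [mul_comm (w _)] at this
    rw [mul_comm] at this
    simpa [_root_.lpNorm] using this
  · simpa [_root_.lpNorm, h1, h2] using Real.inner_le_Lp_mul_Lq Finset.univ x w h

theorem aux_sgn (r : ℝ) : ∃ s : ℝ, |s| = 1 ∧ r * s = |r| := by
  rcases le_total 0 r with h | h
  · exact ⟨1, by simp, by simp [abs_of_nonneg h]⟩
  · exact ⟨-1, by simp, by simp [abs_of_nonpos h]⟩

theorem aux_dual {n : ℕ} (hn : 1 ≤ n) {p q : ℝ≥0∞} (hpq : 1 / p + 1 / q = 1) (x : Fin n → ℝ) :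
    ∃ w, lpNorm q w ≤ 1 ∧ ip x w = lpNorm p x := by
  have : Nonempty (Fin n) := ⟨⟨0, hn⟩⟩
  choose s hs1 hs2 using fun i => aux_sgn (x i)
  unfold ip
  rcases (aux_tri hpq).2 with ⟨rfl, rfl⟩ | ⟨rfl, rfl⟩ | ⟨h1, h2, h⟩
  · exact ⟨s, by simp [_root_.lpNorm, hs1], by simp [_root_.lpNorm, hs2]⟩
  · obtain ⟨i, hi⟩ := exists_eq_ciSup_of_finite (f := fun i => |x i|)
    refine ⟨Pi.single i (s i), ?_, ?_⟩
    · simp only [_root_.lpNorm, ENNReal.one_ne_top, if_false, ENNReal.toReal_one, Real.rpow_one, div_one]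
      rw [Finset.sum_eq_single i]
      · simp [hs1]
      · intro j _ hj; simp [hj]
      · simp
    · rw [Finset.sum_eq_single i]
      · simp [hs2, _root_.lpNorm, hi]
      · intro j _ hj; simp [hj]
      · simp
  · obtain ⟨g, hg1, hg2⟩ := (NNReal.isGreatest_Lp Finset.univ (fun i => Real.nnabs (x i)) h).1
    refine ⟨fun i => s i * g i, ?_, ?_⟩
    · simp only [_root_.lpNorm, h2, if_false, abs_mul, hs1, one_mul, NNReal.abs_eq]
      apply Real.rpow_le_one
      · positivity
      · exact_mod_cast hg1
      · positivity
    · have := congrArg (fun r : NNReal => (r : ℝ)) hg2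
      simp only [NNReal.coe_sum, NNReal.coe_mul, NNReal.coe_rpow, Real.coe_nnabs] at this
      simp only [_root_.lpNorm, h1, if_false, ← this, ← mul_assoc, hs2]

theorem aux_dual_scaled {n : ℕ} (hn : 1 ≤ n) {p q : ℝ≥0∞} (hpq : 1 / p + 1 / q = 1) (x : Fin n → ℝ)
    {lam : ℝ} (hlam : 0 ≤ lam) :
    ∃ w, lpNorm q w ≤ lam ∧ ip x w = lam * lpNorm p x := by
  obtain ⟨w, h1, h2⟩ := aux_dual hn hpq x
  have hq := (aux_tri hpq).1
  have : Fact (1 ≤ q) := ⟨hq⟩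
  refine ⟨lam • w, ?_, ?_⟩
  · rw [aux_norm hq] at h1 ⊢
    rw [WithLp.toLp_smul, norm_smul, Real.norm_of_nonneg hlam]
    exact mul_le_of_le_one_right hlam h1
  · rw [← h2]
    simp only [ip, Finset.mul_sum, Pi.smul_apply, smul_eq_mul]
    exact Finset.sum_congr rfl fun i _ => by ring

theorem aux_ball {n : ℕ} {q : ℝ≥0∞} (hq : 1 ≤ q) {lam : ℝ} (hlam : 0 ≤ lam) :
    {w : Fin n → ℝ | lpNorm q w ≤ lam}.Nonempty ∧ Convex ℝ {w : Fin n → ℝ | lpNorm q w ≤ lam} ∧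
    IsCompact {w : Fin n → ℝ | lpNorm q w ≤ lam} := by
  have : Fact (1 ≤ q) := ⟨hq⟩
  have : {w : Fin n → ℝ | lpNorm q w ≤ lam} =
      Set.image (PiLp.continuousLinearEquiv q ℝ (fun _ : Fin n => ℝ)) (Metric.closedBall 0 lam) := by
    ext w
    simp only [Set.mem_ofPred_eq, aux_norm hq, Set.mem_image, mem_closedBall_zero_iff]
    constructor
    · intro h; exact ⟨_, h, rfl⟩
    · rintro ⟨u, hu, rfl⟩; exact hu
  rw [this]
  refine ⟨(Metric.nonempty_closedBall.2 hlam).image _, ?_, ?_⟩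
  · exact (convex_closedBall _ _).linear_image
      (PiLp.continuousLinearEquiv q ℝ (fun _ : Fin n => ℝ)).toLinearEquiv.toLinearMap
  · exact (isCompact_closedBall _ _).image (ContinuousLinearEquiv.continuous _)

theorem aux_weak {n : ℕ} {p q : ℝ≥0∞} (hp : 1 ≤ p) (hpq : 1 / p + 1 / q = 1)
    (a b ξhat v : Fin n → ℝ) (t lam : ℝ) (γ η ξ : Fin n → ℝ)
    (hγ : ∀ i, 0 ≤ γ i) (hη : ∀ i, 0 ≤ η i) (hl : lpNorm q (v + γ - η) ≤ lam)
    (hξ : ∀ i, a i ≤ ξ i ∧ ξ i ≤ b i) :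
    ip ξ v - t - lam * lpNorm p (ξ - ξhat) ≤
      ip (v + γ - η) ξhat - ip γ a + ip η b - t := by
  have h1 := aux_holder hpq (ξ - ξhat) (v + γ - η)
  have h0 : 0 ≤ lpNorm p (ξ - ξhat) := by
    have : Fact (1 ≤ p) := ⟨hp⟩
    rw [aux_norm hp]; positivity
  have h2 := mul_le_mul_of_nonneg_left hl h0
  have h3 : ip ξ v - ip (ξ - ξhat) (v + γ - η) ≤ ip (v + γ - η) ξhat - ip γ a + ip η b := by
    simp only [ip, ← Finset.sum_sub_distrib, ← Finset.sum_add_distrib]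
    refine Finset.sum_le_sum fun i _ => ?_
    simp only [Pi.sub_apply, Pi.add_apply]
    nlinarith [mul_nonneg (hγ i) (sub_nonneg.2 (hξ i).1), mul_nonneg (hη i) (sub_nonneg.2 (hξ i).2)]
  linarith

theorem aux_saddle {n : ℕ} {q : ℝ≥0∞} (hq : 1 ≤ q)
    (a b ξhat v : Fin n → ℝ) (hab : ∀ i, a i ≤ b i) (lam : ℝ) (hlam : 0 ≤ lam) :
    ∃ w, lpNorm q w ≤ lam ∧ ∃ ζ : Fin n → ℝ, (∀ i, a i ≤ ζ i ∧ ζ i ≤ b i) ∧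
      ∀ u, lpNorm q u ≤ lam → ∀ ξ : Fin n → ℝ, (∀ i, a i ≤ ξ i ∧ ξ i ≤ b i) →
        ip (ξ - ξhat) (v - w) ≤ ip (ζ - ξhat) (v - u) := by
  obtain ⟨ne, cv, cp⟩ := aux_ball (n := n) hq hlam
  have hbox : ∀ ξ : Fin n → ℝ, ξ ∈ Set.Icc a b ↔ ∀ i, a i ≤ ξ i ∧ ξ i ≤ b i := fun ξ => by
    simp [Set.mem_Icc, Pi.le_def, forall_and]
  have := Sion.exists_isSaddlePointOn (X := {w : Fin n → ℝ | lpNorm q w ≤ lam})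
    (Y := Set.Icc a b) (f := fun w ξ => ip (ξ - ξhat) (v - w)) ne cv cp
    (fun ξ _ => by
      refine (Continuous.lowerSemicontinuous ?_).lowerSemicontinuousOn _
      unfold ip; fun_prop)
    (fun ξ _ => by
      apply ConvexOn.quasiconvexOn
      refine ⟨cv, fun x _ y _ s r _ _ hsr => le_of_eq ?_⟩
      obtain rfl : r = 1 - s := by linarith
      simp only [ip, smul_eq_mul, Finset.mul_sum, ← Finset.sum_add_distrib]
      refine Finset.sum_congr rfl fun i _ => ?_
      simp; ring)
    (convex_Icc a b) ⟨a, Set.left_mem_Icc.2 hab⟩ isCompact_Icc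
    (fun w _ => by
      refine (Continuous.upperSemicontinuous ?_).upperSemicontinuousOn _
      unfold ip; fun_prop)
    (fun w _ => by
      apply ConcaveOn.quasiconcaveOn
      refine ⟨convex_Icc a b, fun x _ y _ s r _ _ hsr => le_of_eq ?_⟩
      obtain rfl : r = 1 - s := by linarith
      simp only [ip, smul_eq_mul, Finset.mul_sum, ← Finset.sum_add_distrib]
      refine Finset.sum_congr rfl fun i _ => ?_
      simp; ring)
  obtain ⟨w, hw, ζ, hζ, h⟩ := this
  exact ⟨w, hw, ζ, (hbox ζ).1 hζ, fun u hu ξ hξ => h u hu ξ ((hbox ξ).2 hξ)⟩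

/-- for a box `[a,b]`, `ξ̂ ∈ [a,b]` and `λ ≥ 0`, the supremum over `ξ ∈ [a,b]`
of `⟨ξ,v⟩ − t − λ‖ξ − ξ̂‖_p` equals the (attained) minimum of
`⟨v+γ−η, ξ̂⟩ − ⟨γ,a⟩ + ⟨η,b⟩ − t` over `γ, η ≥ 0` with `‖v+γ−η‖_q ≤ λ`. -/
theorem stmt8 (n : ℕ) (hn : 1 ≤ n) (p q : ℝ≥0∞) (hp : 1 ≤ p) (hpq : 1 / p + 1 / q = 1)
    (a b : Fin n → ℝ) (hab : ∀ i, a i ≤ b i)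
    (ξhat : Fin n → ℝ) (hξ : ∀ i, a i ≤ ξhat i ∧ ξhat i ≤ b i)
    (v : Fin n → ℝ) (t lam : ℝ) (hlam : 0 ≤ lam) :
    IsLeast {y : ℝ | ∃ γ η : Fin n → ℝ, (∀ i, 0 ≤ γ i) ∧ (∀ i, 0 ≤ η i) ∧
        lpNorm q (v + γ - η) ≤ lam ∧
        y = ip (v + γ - η) ξhat - ip γ a + ip η b - t}
      (sSup {y : ℝ | ∃ ξ : Fin n → ℝ, (∀ i, a i ≤ ξ i ∧ ξ i ≤ b i) ∧
        y = ip ξ v - t - lam * lpNorm p (ξ - ξhat)}) := by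
  have hq := (aux_tri hpq).1
  obtain ⟨w, hw, ζ, hζ, h⟩ := aux_saddle hq a b ξhat v hab lam hlam
  obtain ⟨u, hu, hu2⟩ := aux_dual_scaled hn hpq (ζ - ξhat) hlam
  let γ : Fin n → ℝ := fun i => max (w i - v i) 0
  let η : Fin n → ℝ := fun i => max (v i - w i) 0
  have hγ : ∀ i, 0 ≤ γ i := fun i => le_max_right _ _
  have hη : ∀ i, 0 ≤ η i := fun i => le_max_right _ _
  have hwe : v + γ - η = w := by
    funext i
    simp only [Pi.sub_apply, Pi.add_apply, γ, η]
    rcases le_total (v i) (w i) with h | h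
    · rw [max_eq_left (by linarith), max_eq_right (by linarith)]; ring
    · rw [max_eq_right (by linarith), max_eq_left (by linarith)]; ring
  have hl : lpNorm q (v + γ - η) ≤ lam := by rw [hwe]; exact hw
  let ξ : Fin n → ℝ := fun i => if v i ≤ w i then a i else b i
  have hξbox : ∀ i, a i ≤ ξ i ∧ ξ i ≤ b i := fun i => by
    simp only [ξ]; split_ifs <;> simp [hab i]
  have key := h u hu ξ hξbox
  have e1 : ip (ζ - ξhat) (v - u) = ip ζ v - ip ξhat v - lam * lpNorm p (ζ - ξhat) := by
    rw [← hu2]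
    simp only [ip, ← Finset.sum_sub_distrib]
    exact Finset.sum_congr rfl fun i _ => by simp; ring
  have e2 : ip (ξ - ξhat) (v - w) + ip ξhat v = ip (v + γ - η) ξhat - ip γ a + ip η b := by
    rw [hwe]
    simp only [ip, ← Finset.sum_sub_distrib, ← Finset.sum_add_distrib]
    refine Finset.sum_congr rfl fun i _ => ?_
    simp only [Pi.sub_apply, γ, η, ξ]
    split_ifs with h
    · rw [max_eq_left (by linarith), max_eq_right (by linarith)]; ring
    · rw [max_eq_right (by linarith), max_eq_left (by linarith)]; ring
  have weak := fun γ η ξ => aux_weak hp hpq a b ξhat v t lam γ η ξ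
  have eq : ip ζ v - t - lam * lpNorm p (ζ - ξhat) =
      ip (v + γ - η) ξhat - ip γ a + ip η b - t :=
    le_antisymm (weak γ η ζ hγ hη hl hζ) (by linarith)
  have hS : sSup {y : ℝ | ∃ ξ : Fin n → ℝ, (∀ i, a i ≤ ξ i ∧ ξ i ≤ b i) ∧
        y = ip ξ v - t - lam * lpNorm p (ξ - ξhat)} =
      ip ζ v - t - lam * lpNorm p (ζ - ξhat) := by
    apply IsGreatest.csSup_eq
    refine ⟨⟨ζ, hζ, rfl⟩, ?_⟩
    rintro y ⟨x, hx, rfl⟩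
    rw [eq]
    exact weak γ η x hγ hη hl hx
  rw [hS]
  refine ⟨⟨γ, η, hγ, hη, hl, eq⟩, ?_⟩
  rintro y ⟨γ', η', h1, h2, h3, rfl⟩
  exact weak γ' η' ζ h1 h2 h3 hζ
end

section
/- (Corollary 2, reduction of the DR minimum cost flow problem) Let ĉ¹,…,ĉᴺ ∈ ℝⁿ (N ≥ 1) with empirical distribution F_N = (1/N)·Σ_{k=1}^N δ_{ĉᵏ}, let ε ≥ 0, and let X be any nonempty subset of { x ∈ ℝⁿ : x_i ≥ 0 for all i } (e.g., the set of feasible flows). Then inf over x ∈ X of sup{ ∫ ⟨c,x⟩ dμ(c) : μ a Borel probability measure on ℝⁿ with finite first moment and d_W^∞(F_N,μ) ≤ ε } equals inf over x ∈ X of Σ_{i=1}^n ( (1/N)·Σ_{k=1}^N ĉᵏ_i + ε )·x_i, and a point x ∈ X attains the first infimum if and only if it attains the second. -/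
open MeasureTheory Filter Topology
open scoped ENNReal BigOperators

/-- `h(v,t,ξ) = max(⟨ξ,v⟩ − t, 0)`. -/
noncomputable def hfun {n : ℕ} (v : Fin n → ℝ) (t : ℝ) (ξ : Fin n → ℝ) : ℝ :=
  max (ip ξ v - t) 0

/-- The empirical distribution `(1/N)·Σᵢ δ_{ξⁱ}` of `N` samples. -/
noncomputable def empirical {n : ℕ} (N : ℕ) (ξ : Fin N → Fin n → ℝ) :
    MeasureTheory.Measure (Fin n → ℝ) :=
  (N : ℝ≥0∞)⁻¹ • ∑ i, MeasureTheory.Measure.dirac (ξ i)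

/-- The Wasserstein distance (valued in `ℝ≥0∞`) between two Borel probability measures
on ℝⁿ, with ground metric `‖·‖_p`: the infimum over couplings `K` (probability measures on
ℝⁿ × ℝⁿ with the prescribed marginals) of `∫ ‖x − y‖_p dK(x,y)`. -/
noncomputable def dW {n : ℕ} (p : ℝ≥0∞) (μ ν : MeasureTheory.Measure (Fin n → ℝ)) : ℝ≥0∞ :=
  ⨅ (K : MeasureTheory.Measure ((Fin n → ℝ) × (Fin n → ℝ)))
    (_ : MeasureTheory.IsProbabilityMeasure K)
    (_ : K.map Prod.fst = μ) (_ : K.map Prod.snd = ν),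
    ∫⁻ z, ENNReal.ofReal (lpNorm p (z.1 - z.2)) ∂K

/-- The worst-case expected linear cost of a flow `x` over the `‖·‖_∞`-Wasserstein ball of
radius `ε` around the empirical distribution of the cost samples. -/
noncomputable def wcCost {n : ℕ} (N : ℕ) (c : Fin N → Fin n → ℝ) (ε : ℝ)
    (x : Fin n → ℝ) : ℝ :=
  sSup {r : ℝ | ∃ μ : MeasureTheory.Measure (Fin n → ℝ),
    MeasureTheory.IsProbabilityMeasure μ ∧
    MeasureTheory.Integrable (fun y => lpNorm ∞ y) μ ∧
    dW ∞ (empirical N c) μ ≤ ENNReal.ofReal ε ∧ r = ∫ y, ip y x ∂μ}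

theorem aux_lpNorm {n : ℕ} (y : Fin n → ℝ) : lpNorm ∞ y = ‖y‖ := by
  unfold _root_.lpNorm
  rw [if_pos rfl]
  apply le_antisymm
  · exact Real.iSup_le (fun i => norm_le_pi_norm y i) (norm_nonneg _)
  · rw [pi_norm_le_iff_of_nonneg (Real.iSup_nonneg (fun i => abs_nonneg _))]
    intro i
    exact le_ciSup (f := fun i => |y i|) (Set.finite_range _).bddAbove i

theorem aux_ip_cont {n : ℕ} (x : Fin n → ℝ) : Continuous (fun y => ip y x) := by
  unfold ip
  fun_prop

theorem aux_ip_bound {n : ℕ} (x y : Fin n → ℝ) (hx : ∀ i, 0 ≤ x i) :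
    |ip y x| ≤ ‖y‖ * ∑ i, x i := by
  unfold ip
  rw [Finset.mul_sum]
  refine (Finset.abs_sum_le_sum_abs _ _).trans (Finset.sum_le_sum fun i _ => ?_)
  rw [abs_mul, abs_of_nonneg (hx i)]
  exact mul_le_mul_of_nonneg_right (norm_le_pi_norm y i) (hx i)

theorem aux_emp_prob {n N : ℕ} (hN : 1 ≤ N) (c : Fin N → Fin n → ℝ) :
    IsProbabilityMeasure (empirical N c) := by
  constructor
  have : (N : ℝ≥0∞) ≠ 0 := by exact_mod_cast (by omega : N ≠ 0)
  simp [empirical, ENNReal.inv_mul_cancel this]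

theorem aux_emp_integrable {n N : ℕ} (hN : 1 ≤ N) (c : Fin N → Fin n → ℝ)
    (f : (Fin n → ℝ) → ℝ) (hf : Continuous f) : Integrable f (empirical N c) := by
  have : (N : ℝ≥0∞) ≠ 0 := by exact_mod_cast (by omega : N ≠ 0)
  unfold empirical
  refine Integrable.smul_measure ?_ (by simpa using (by omega : N ≠ 0))
  rw [integrable_finsetSum_measure]
  intro i _
  exact integrable_dirac (by simp)

theorem aux_emp_integral {n N : ℕ} (c : Fin N → Fin n → ℝ)
    (f : (Fin n → ℝ) → ℝ) : ∫ y, f y ∂(empirical N c) = (1 / (N : ℝ)) * ∑ k, f (c k) := by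
  unfold empirical
  rw [integral_smul_measure, integral_finsetSum_measure]
  · simp
  · intro i _
    exact integrable_dirac (by simp)

theorem aux_emp_ip {n N : ℕ} (c : Fin N → Fin n → ℝ) (x : Fin n → ℝ) :
    ∫ y, ip y x ∂(empirical N c) = ∑ i, ((1 / (N : ℝ)) * ∑ k, c k i) * x i := by
  rw [aux_emp_integral]
  unfold ip
  rw [Finset.sum_comm, Finset.mul_sum]
  refine Finset.sum_congr rfl fun i _ => ?_
  rw [mul_assoc, Finset.sum_mul]

theorem aux_upper {n N : ℕ} (hN : 1 ≤ N) (c : Fin N → Fin n → ℝ) (ε : ℝ) (hε : 0 ≤ ε)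
    (x : Fin n → ℝ) (hx : ∀ i, 0 ≤ x i) (μ : Measure (Fin n → ℝ))
    (hμ : Integrable (fun y => lpNorm ∞ y) μ)
    (hd : dW ∞ (empirical N c) μ ≤ ENNReal.ofReal ε) :
    ∫ y, ip y x ∂μ ≤ ∑ i, ((1 / (N : ℝ)) * ∑ k, c k i) * x i + ε * ∑ i, x i := by
  simp only [aux_lpNorm] at hμ
  have hS : 0 ≤ ∑ i, x i := Finset.sum_nonneg fun i _ => hx i
  have hcont := aux_ip_cont x
  have key : ∀ δ : ℝ, 0 < δ → ∫ y, ip y x ∂μ ≤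
      ∑ i, ((1 / (N : ℝ)) * ∑ k, c k i) * x i + (ε + δ) * ∑ i, x i := by
    intro δ hδ
    have hlt : dW ∞ (empirical N c) μ < ENNReal.ofReal (ε + δ) :=
      hd.trans_lt ((ENNReal.ofReal_lt_ofReal_iff (by linarith)).2 (by linarith))
    unfold dW at hlt
    simp only [iInf_lt_iff, aux_lpNorm] at hlt
    obtain ⟨K, hK, h1, h2, hlt⟩ := hlt
    have hIμ : Integrable (fun y => ip y x) μ := by
      refine (hμ.mul_const (∑ i, x i)).mono' hcont.aestronglyMeasurable ?_
      exact ae_of_all _ fun y => aux_ip_bound x y hx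
    have hI1 : Integrable (fun y => ip y x) (empirical N c) := aux_emp_integrable hN c _ hcont
    have hA : Integrable (fun z : (Fin n → ℝ) × (Fin n → ℝ) => ip z.1 x) K := by
      rw [← h1] at hI1
      exact hI1.comp_measurable measurable_fst
    have hB : Integrable (fun z : (Fin n → ℝ) × (Fin n → ℝ) => ip z.2 x) K := by
      rw [← h2] at hIμ
      exact hIμ.comp_measurable measurable_snd
    have eA : ∫ z, ip z.1 x ∂K = ∫ y, ip y x ∂(empirical N c) := by
      rw [← h1, integral_map measurable_fst.aemeasurable hcont.aestronglyMeasurable]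
    have eB : ∫ z, ip z.2 x ∂K = ∫ y, ip y x ∂μ := by
      rw [← h2, integral_map measurable_snd.aemeasurable hcont.aestronglyMeasurable]
    have hnm : AEStronglyMeasurable
        (fun z : (Fin n → ℝ) × (Fin n → ℝ) => ‖z.1 - z.2‖) K := by
      apply Continuous.aestronglyMeasurable
      fun_prop
    have hC : Integrable (fun z : (Fin n → ℝ) × (Fin n → ℝ) => ‖z.1 - z.2‖) K := by
      refine ⟨hnm, ?_⟩
      rw [hasFiniteIntegral_iff_ofReal (ae_of_all _ fun z => norm_nonneg _)]
      exact hlt.trans ENNReal.ofReal_lt_top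
    have hCle : ∫ z, ‖z.1 - z.2‖ ∂K ≤ ε + δ := by
      rw [integral_eq_lintegral_of_nonneg_ae (ae_of_all _ fun z => norm_nonneg _) hnm]
      exact ENNReal.toReal_le_of_le_ofReal (by linarith) hlt.le
    have hle : ∫ z, ip z.2 x ∂K ≤ ∫ z, (ip z.1 x + ‖z.1 - z.2‖ * ∑ i, x i) ∂K := by
      refine integral_mono hB (hA.add (hC.mul_const _)) fun z => ?_
      have h := (abs_le.1 (aux_ip_bound x (z.1 - z.2) hx)).1
      have h' : ip (z.1 - z.2) x = ip z.1 x - ip z.2 x := by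
        simp [ip, sub_mul, Finset.sum_sub_distrib]
      rw [h'] at h
      show ip z.2 x ≤ ip z.1 x + ‖z.1 - z.2‖ * ∑ i, x i
      linarith
    rw [integral_add hA (hC.mul_const _), integral_mul_const, eA, eB, aux_emp_ip] at hle
    have := mul_le_mul_of_nonneg_right hCle hS
    linarith
  by_contra! hcon
  set S := ∑ i, x i
  set A := ∑ i, ((1 / (N : ℝ)) * ∑ k, c k i) * x i
  set I := ∫ y, ip y x ∂μ
  have hg : 0 < I - (A + ε * S) := by linarith
  have h := key ((I - (A + ε * S)) / (S + 1)) (by positivity)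
  have h3 : (I - (A + ε * S)) / (S + 1) * S < I - (A + ε * S) := by
    rw [div_mul_eq_mul_div, div_lt_iff₀ (by positivity)]
    nlinarith
  linarith

theorem aux_lower {n N : ℕ} (hN : 1 ≤ N) (c : Fin N → Fin n → ℝ) (ε : ℝ) (hε : 0 ≤ ε) :
    dW ∞ (empirical N c) (empirical N (fun k i => c k i + ε)) ≤ ENNReal.ofReal ε := by
  have hp := aux_emp_prob hN c
  let T : (Fin n → ℝ) → (Fin n → ℝ) := fun y i => y i + ε
  have hT : Measurable T := by
    apply Continuous.measurable
    fun_prop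
  have hg : Measurable (fun y => (y, T y)) := measurable_id.prodMk hT
  unfold dW
  refine (iInf_le _ ((empirical N c).map (fun y => (y, T y)))).trans ?_
  refine (iInf_le _ (Measure.isProbabilityMeasure_map hg.aemeasurable)).trans ?_
  refine (iInf_le _ ?_).trans ((iInf_le _ ?_).trans ?_)
  · rw [Measure.map_map measurable_fst hg]
    exact Measure.map_id
  · rw [Measure.map_map measurable_snd hg]
    change Measure.map T _ = _
    unfold empirical
    rw [Measure.map_smul, Measure.map_finset_sum hT.aemeasurable]
    simp only [Measure.map_dirac' hT]
    rfl
  · simp only [aux_lpNorm]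
    rw [lintegral_map (by fun_prop) hg]
    have : ∀ y : Fin n → ℝ, ENNReal.ofReal ‖y - T y‖ ≤ ENNReal.ofReal ε := by
      intro y
      apply ENNReal.ofReal_le_ofReal
      rw [pi_norm_le_iff_of_nonneg hε]
      intro i
      simp [T, abs_of_nonneg hε]
    exact (lintegral_mono this).trans (by simp)

theorem aux_wc {n N : ℕ} (hN : 1 ≤ N) (c : Fin N → Fin n → ℝ) (ε : ℝ) (hε : 0 ≤ ε)
    (x : Fin n → ℝ) (hx : ∀ i, 0 ≤ x i) :
    wcCost N c ε x = ∑ i, ((1 / (N : ℝ)) * ∑ k, c k i + ε) * x i := by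
  have hform : ∑ i, ((1 / (N : ℝ)) * ∑ k, c k i + ε) * x i =
      ∑ i, ((1 / (N : ℝ)) * ∑ k, c k i) * x i + ε * ∑ i, x i := by
    rw [Finset.mul_sum, ← Finset.sum_add_distrib]
    exact Finset.sum_congr rfl fun i _ => by ring
  unfold wcCost
  refine IsGreatest.csSup_eq ⟨⟨empirical N (fun k i => c k i + ε), aux_emp_prob hN _, ?_,
    aux_lower hN c ε hε, ?_⟩, ?_⟩
  · simp only [aux_lpNorm]
    exact aux_emp_integrable hN _ _ continuous_norm
  · rw [aux_emp_ip]
    refine Finset.sum_congr rfl fun i _ => ?_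
    have : (N : ℝ) ≠ 0 := by exact_mod_cast (by omega : N ≠ 0)
    simp only [Finset.sum_add_distrib, Finset.sum_const, Finset.card_univ, Fintype.card_fin,
      nsmul_eq_mul]
    field_simp
  · rintro r ⟨μ, _, hμ, hd, rfl⟩
    rw [hform]
    exact aux_upper hN c ε hε x hx μ hμ hd

/-- Corollary 2, reduction of the DR minimum cost flow problem: over any
nonempty set `X` of nonnegative flows, the DR problem `inf_{x∈X} sup{∫⟨c,x⟩dμ : d_W^∞ ≤ ε}`
has the same optimal value as `inf_{x∈X} Σᵢ((1/N)Σₖ ĉᵏᵢ + ε)xᵢ`, with the same minimizers. -/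
theorem stmt16 (n : ℕ) (hn : 1 ≤ n)
    (N : ℕ) (hN : 1 ≤ N) (c : Fin N → Fin n → ℝ) (ε : ℝ) (hε : 0 ≤ ε)
    (X : Set (Fin n → ℝ)) (hXne : X.Nonempty) (hX : ∀ x ∈ X, ∀ i, 0 ≤ x i) :
    sInf (wcCost N c ε '' X) =
      sInf ((fun x : Fin n → ℝ => ∑ i, ((1 / (N : ℝ)) * ∑ k, c k i + ε) * x i) '' X) ∧
    ∀ x ∈ X, (wcCost N c ε x = sInf (wcCost N c ε '' X) ↔
      (∑ i, ((1 / (N : ℝ)) * ∑ k, c k i + ε) * x i) =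
        sInf ((fun x : Fin n → ℝ => ∑ i, ((1 / (N : ℝ)) * ∑ k, c k i + ε) * x i) '' X)) := by
  have hEq : ∀ x ∈ X, wcCost N c ε x = ∑ i, ((1 / (N : ℝ)) * ∑ k, c k i + ε) * x i :=
    fun x hxX => aux_wc hN c ε hε x (hX x hxX)
  have hIm : wcCost N c ε '' X =
      (fun x : Fin n → ℝ => ∑ i, ((1 / (N : ℝ)) * ∑ k, c k i + ε) * x i) '' X :=
    Set.image_congr hEq
  refine ⟨by rw [hIm], fun x hxX => ?_⟩
  rw [hIm, hEq x hxX]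
end

section
/- (Corollary 1, DR bi-criteria shortest path via scalarization) Let c ∈ ℝⁿ, α ∈ (0,1], ε ≥ 0, let ξ̂¹,…,ξ̂ᴺ ∈ ℝⁿ (N ≥ 1) with empirical distribution F_N, let P ⊆ {0,1}ⁿ be nonempty, and let λ̄₁, λ̄₂ ≥ 0 with λ̄₁ + λ̄₂ ≠ 0. Define W(v,t) = t + (1/α)·sup{ ∫ h(v,t,ξ) dμ(ξ) : μ a Borel probability measure on ℝⁿ with finite first moment and d_W(F_N,μ) ≤ ε }. Suppose (p̄, t̄, s̄, λ̄) minimizes λ̄₁·⟨c,p⟩ + λ̄₂·( t + (1/α)·((1/N)·Σ_{i=1}^N s_i + λ·ε) ) over all p ∈ P, t ∈ ℝ, s ∈ ℝᴺ, λ ∈ ℝ satisfying ⟨p,ξ̂ⁱ⟩ − t ≤ s_i, s_i ≥ 0 for all i, and ‖p‖_q ≤ λ. Then (p̄,t̄) is weakly robust efficient: for every p ∈ P and t ∈ ℝ, λ̄₁·⟨c,p⟩ + λ̄₂·W(p,t) ≥ λ̄₁·⟨c,p̄⟩ + λ̄₂·W(p̄,t̄). -/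
open MeasureTheory Filter Topology
open scoped ENNReal BigOperators

/-- `W(v,t) = t + (1/α)·sup{∫ h(v,t,·) dμ : μ probability measure with finite first moment,
d_W(F_N,μ) ≤ ε}`. -/
noncomputable def Wobj {n : ℕ} (p : ℝ≥0∞) (α ε : ℝ) (N : ℕ) (ξ : Fin N → Fin n → ℝ)
    (v : Fin n → ℝ) (t : ℝ) : ℝ :=
  t + (1 / α) * sSup {r : ℝ | ∃ μ : MeasureTheory.Measure (Fin n → ℝ),
    MeasureTheory.IsProbabilityMeasure μ ∧
    MeasureTheory.Integrable (fun x => lpNorm p x) μ ∧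
    dW p (empirical N ξ) μ ≤ ENNReal.ofReal ε ∧ r = ∫ x, hfun v t x ∂μ}

theorem aux_conj {p q : ℝ≥0∞} (hpq : 1 / p + 1 / q = 1) :
    1 / p.toReal + 1 / q.toReal = 1 := by
  have h := congrArg ENNReal.toReal hpq
  have h1 : 1 / p ≠ ∞ := fun h0 => by simp [h0] at hpq
  have h2 : 1 / q ≠ ∞ := fun h0 => by simp [h0] at hpq
  rw [ENNReal.toReal_add h1 h2] at h
  simpa using h

theorem aux_pos {p q : ℝ≥0∞} (hpq : 1 / p + 1 / q = 1) : p ≠ 0 ∧ q ≠ 0 := by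
  constructor <;> rintro rfl <;> simp at hpq

theorem lpNorm_nonneg' {n : ℕ} (p : ℝ≥0∞) (x : Fin n → ℝ) : 0 ≤ lpNorm p x := by
  unfold _root_.lpNorm
  split_ifs
  · exact Real.iSup_nonneg fun i => abs_nonneg _
  · positivity

theorem lpNorm_smul' {n : ℕ} (p : ℝ≥0∞) (hp : p ≠ 0) (a : ℝ) (x : Fin n → ℝ) :
    lpNorm p (a • x) = |a| * lpNorm p x := by
  unfold _root_.lpNorm
  split_ifs with h
  · simp [abs_mul, Real.mul_iSup_of_nonneg (abs_nonneg a)]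
  · have h0 : p.toReal ≠ 0 := (ENNReal.toReal_pos hp h).ne'
    simp only [Pi.smul_apply, smul_eq_mul, abs_mul]
    simp_rw [Real.mul_rpow (abs_nonneg _) (abs_nonneg _)]
    rw [← Finset.mul_sum, Real.mul_rpow (by positivity) (by positivity),
      ← Real.rpow_mul (abs_nonneg _)]
    rw [mul_one_div_cancel h0, Real.rpow_one]

theorem ip_comm' {n : ℕ} (x y : Fin n → ℝ) : ip x y = ip y x := by
  unfold ip; simp [mul_comm]

theorem holder_one_top {n : ℕ} (x y : Fin n → ℝ) :
    ip x y ≤ lpNorm 1 x * lpNorm ∞ y := by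
  unfold ip _root_.lpNorm
  simp only [ENNReal.one_ne_top, if_false, if_true, ENNReal.toReal_one, Real.rpow_one, div_one]
  rw [Finset.sum_mul]
  refine Finset.sum_le_sum fun i _ => ?_
  calc x i * y i ≤ |x i * y i| := le_abs_self _
    _ = |x i| * |y i| := abs_mul _ _
    _ ≤ _ := mul_le_mul_of_nonneg_left
      (le_ciSup (f := fun i => |y i|) (Set.finite_range _).bddAbove i) (abs_nonneg _)

theorem holder' {n : ℕ} {p q : ℝ≥0∞} (hpq : 1 / p + 1 / q = 1) (x y : Fin n → ℝ) :
    ip x y ≤ lpNorm p x * lpNorm q y := by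
  by_cases hp : p = ∞
  · subst hp
    have : q = 1 := by simpa using hpq
    subst this
    rw [ip_comm', mul_comm]
    exact holder_one_top y x
  by_cases hq : q = ∞
  · subst hq
    have : p = 1 := by simpa using hpq
    subst this
    exact holder_one_top x y
  obtain ⟨p0, q0⟩ := aux_pos hpq
  have hc : p.toReal.HolderConjugate q.toReal := by
    have := aux_conj hpq
    have h1 := ENNReal.toReal_pos p0 hp
    have h2 := ENNReal.toReal_pos q0 hq
    refine ⟨by simpa using this, h1, h2⟩
  unfold ip _root_.lpNorm
  simp only [hp, hq, if_false]
  exact Real.inner_le_Lp_mul_Lq Finset.univ x y hc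

theorem lpNorm_zero' {n : ℕ} {p : ℝ≥0∞} (hp : p ≠ 0) : lpNorm p (0 : Fin n → ℝ) = 0 := by
  have := lpNorm_smul' p hp 0 (0 : Fin n → ℝ)
  simpa using this

theorem lpNorm_binary {n : ℕ} {p : ℝ≥0∞} (hp : p ≠ 0) (v : Fin n → ℝ)
    (hv : ∀ i, v i = 0 ∨ v i = 1) (hv0 : v ≠ 0) :
    lpNorm p v = (∑ i, v i) ^ (1 / p.toReal) := by
  unfold _root_.lpNorm
  split_ifs with h
  · subst h
    simp only [ENNReal.toReal_top, div_zero, Real.rpow_zero]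
    obtain ⟨i, hi⟩ := Function.ne_iff.1 hv0
    have hi1 : v i = 1 := (hv i).resolve_left hi
    haveI : Nonempty (Fin n) := ⟨i⟩
    apply le_antisymm
    · refine ciSup_le fun j => ?_
      rcases hv j with h | h <;> simp [h]
    · have := le_ciSup (f := fun i => |v i|) (Set.finite_range _).bddAbove i
      simpa [hi1] using this
  · have h0 : p.toReal ≠ 0 := (ENNReal.toReal_pos hp h).ne'
    congr 1
    refine Finset.sum_congr rfl fun i _ => ?_
    rcases hv i with h | h <;> simp [h, h0]

theorem dual_vec {n : ℕ} {p q : ℝ≥0∞} (hpq : 1 / p + 1 / q = 1) (v : Fin n → ℝ)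
    (hv : ∀ i, v i = 0 ∨ v i = 1) :
    ∃ u : Fin n → ℝ, lpNorm p u ≤ 1 ∧ ip u v = lpNorm q v := by
  obtain ⟨p0, q0⟩ := aux_pos hpq
  by_cases hv0 : v = 0
  · subst hv0
    exact ⟨0, by simp [lpNorm_zero' p0], by simp [lpNorm_zero' q0, ip]⟩
  have hk : 0 < ∑ i, v i := by
    obtain ⟨i, hi⟩ := Function.ne_iff.1 hv0
    have hi1 : v i = 1 := (hv i).resolve_left hi
    refine Finset.sum_pos' (fun j _ => ?_) ⟨i, Finset.mem_univ _, by simp [hi1]⟩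
    rcases hv j with h | h <;> simp [h]
  have hs : ip v v = ∑ i, v i := by
    unfold ip
    refine Finset.sum_congr rfl fun i _ => ?_
    rcases hv i with h | h <;> simp [h]
  refine ⟨(∑ i, v i) ^ (-(1 / p.toReal)) • v, ?_, ?_⟩
  · rw [lpNorm_smul' p p0, lpNorm_binary p0 v hv hv0, abs_of_pos (Real.rpow_pos_of_pos hk _),
      ← Real.rpow_add hk]
    simp
  · rw [lpNorm_binary q0 v hv hv0]
    have : ip ((∑ i, v i) ^ (-(1 / p.toReal)) • v) v = (∑ i, v i) ^ (-(1 / p.toReal)) * ip v v := by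
      unfold ip; simp [Finset.mul_sum, mul_assoc]
    rw [this, hs]
    nth_rewrite 2 [← Real.rpow_one (∑ i, v i)]
    rw [← Real.rpow_add hk]
    congr 1
    linarith [aux_conj hpq]

theorem ip_add_left' {n : ℕ} (x y v : Fin n → ℝ) : ip (x + y) v = ip x v + ip y v := by
  unfold ip; simp [add_mul, Finset.sum_add_distrib]

theorem ip_smul_left' {n : ℕ} (a : ℝ) (y v : Fin n → ℝ) : ip (a • y) v = a * ip y v := by
  unfold ip; simp [mul_assoc, Finset.mul_sum]

theorem hfun_nonneg' {n : ℕ} (v : Fin n → ℝ) (t : ℝ) (x : Fin n → ℝ) : 0 ≤ hfun v t x :=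
  le_max_right _ _

theorem hfun_cont {n : ℕ} (v : Fin n → ℝ) (t : ℝ) : Continuous (hfun v t) := by
  unfold hfun ip; fun_prop

theorem hfun_lip {n : ℕ} {p q : ℝ≥0∞} (hpq : 1 / p + 1 / q = 1) (v : Fin n → ℝ) (t : ℝ)
    (x y : Fin n → ℝ) : hfun v t y ≤ hfun v t x + lpNorm q v * lpNorm p (x - y) := by
  have h1 := holder' hpq (y - x) v
  have h2 : lpNorm p (y - x) = lpNorm p (x - y) := by
    have := lpNorm_smul' p (aux_pos hpq).1 (-1) (x - y)
    simpa using this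
  have h3 : ip y v = ip x v + ip (y - x) v := by rw [← ip_add_left']; simp
  rw [h2, mul_comm] at h1
  have := mul_nonneg (lpNorm_nonneg' q v) (lpNorm_nonneg' p (x - y))
  have h4 : ip x v - t ≤ hfun v t x := le_max_left _ _
  have h5 := hfun_nonneg' v t x
  conv_lhs => unfold hfun
  apply max_le <;> linarith

theorem upper {n : ℕ} {p q : ℝ≥0∞} (hpq : 1 / p + 1 / q = 1) (ε : ℝ) (hε : 0 ≤ ε)
    (N : ℕ) (hN : 1 ≤ N) (ξ : Fin N → Fin n → ℝ) (v : Fin n → ℝ) (t : ℝ)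
    (μ : Measure (Fin n → ℝ))
    (hd : dW p (empirical N ξ) μ ≤ ENNReal.ofReal ε) :
    ∫ x, hfun v t x ∂μ ≤ (1 / (N : ℝ)) * ∑ i, hfun v t (ξ i) + lpNorm q v * ε := by
  have hL := lpNorm_nonneg' q v
  have hA : 0 ≤ (1 / (N : ℝ)) * ∑ i, hfun v t (ξ i) :=
    mul_nonneg (by positivity) (Finset.sum_nonneg fun i _ => hfun_nonneg' _ _ _)
  have key : ∀ δ : ℝ, 0 < δ → ∫ x, hfun v t x ∂μ ≤
      (1 / (N : ℝ)) * ∑ i, hfun v t (ξ i) + lpNorm q v * (ε + δ) := by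
    intro δ hδ
    have hlt : dW p (empirical N ξ) μ < ENNReal.ofReal (ε + δ) :=
      hd.trans_lt ((ENNReal.ofReal_lt_ofReal_iff (by linarith)).2 (by linarith))
    unfold dW at hlt
    simp only [iInf_lt_iff] at hlt
    obtain ⟨K, hK, h1, h2, hc⟩ := hlt
    have hm : Measurable fun x => ENNReal.ofReal (hfun v t x) :=
      (hfun_cont v t).measurable.ennreal_ofReal
    rw [integral_eq_lintegral_of_nonneg_ae (Eventually.of_forall (hfun_nonneg' v t))
      (hfun_cont v t).aestronglyMeasurable]
    apply ENNReal.toReal_le_of_le_ofReal (by positivity)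
    calc ∫⁻ x, ENNReal.ofReal (hfun v t x) ∂μ
        = ∫⁻ z, ENNReal.ofReal (hfun v t z.2) ∂K := by
          rw [← h2, lintegral_map hm measurable_snd]
      _ ≤ ∫⁻ z, (ENNReal.ofReal (hfun v t z.1) +
            ENNReal.ofReal (lpNorm q v) * ENNReal.ofReal (lpNorm p (z.1 - z.2))) ∂K := by
          refine lintegral_mono fun z => ?_
          rw [← ENNReal.ofReal_mul hL, ← ENNReal.ofReal_add (hfun_nonneg' _ _ _)
            (mul_nonneg hL (lpNorm_nonneg' _ _))]
          exact ENNReal.ofReal_le_ofReal (hfun_lip hpq v t z.1 z.2)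
      _ = ∫⁻ x, ENNReal.ofReal (hfun v t x) ∂(empirical N ξ) +
            ENNReal.ofReal (lpNorm q v) * ∫⁻ z, ENNReal.ofReal (lpNorm p (z.1 - z.2)) ∂K := by
          rw [lintegral_add_left (f := fun z : (Fin n → ℝ) × (Fin n → ℝ) =>
              ENNReal.ofReal (hfun v t z.1)) (hm.comp measurable_fst),
            lintegral_const_mul' _ _ ENNReal.ofReal_ne_top, ← h1, lintegral_map hm measurable_fst]
      _ ≤ ENNReal.ofReal ((1 / (N : ℝ)) * ∑ i, hfun v t (ξ i)) +
            ENNReal.ofReal (lpNorm q v) * ENNReal.ofReal (ε + δ) := by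
          gcongr
          unfold empirical
          rw [lintegral_smul_measure, lintegral_finsetSum_measure,
            ENNReal.ofReal_mul (by positivity),
            ENNReal.ofReal_sum_of_nonneg (fun i _ => hfun_nonneg' _ _ _)]
          simp only [lintegral_dirac, smul_eq_mul]
          rw [one_div, ENNReal.ofReal_inv_of_pos (by positivity), ENNReal.ofReal_natCast]
      _ = _ := by
          rw [← ENNReal.ofReal_mul hL, ← ENNReal.ofReal_add hA (by positivity)]
  refine le_of_forall_pos_le_add fun η hη => ?_
  have hδ : 0 < η / (lpNorm q v + 1) := by positivity
  refine (key _ hδ).trans ?_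
  have : lpNorm q v * (η / (lpNorm q v + 1)) ≤ η := by
    rw [mul_div_assoc', div_le_iff₀ (by positivity)]
    nlinarith
  linarith [mul_add (lpNorm q v) ε (η / (lpNorm q v + 1))]

theorem lpNorm_meas {n : ℕ} (p : ℝ≥0∞) : Measurable (fun x : Fin n → ℝ => lpNorm p x) := by
  unfold _root_.lpNorm
  split_ifs
  · exact Measurable.iSup fun i => (measurable_pi_apply i).abs
  · fun_prop

theorem lower_mem {n : ℕ} {p : ℝ≥0∞} (ε : ℝ) 
    (N : ℕ) (hN : 1 ≤ N) (ξ : Fin N → Fin n → ℝ) (v : Fin n → ℝ) (t : ℝ) (hp0 : p ≠ 0)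
    (δ : ℝ) (h0 : 0 ≤ δ) (h1 : δ ≤ 1) (w : Fin n → ℝ) (hw : δ * lpNorm p w ≤ ε) :
    ((1 - δ) / N * ∑ i, hfun v t (ξ i) + δ / N * ∑ i, hfun v t (ξ i + w)) ∈
      {r : ℝ | ∃ μ : MeasureTheory.Measure (Fin n → ℝ),
    MeasureTheory.IsProbabilityMeasure μ ∧
    MeasureTheory.Integrable (fun x => lpNorm p x) μ ∧
    dW p (empirical N ξ) μ ≤ ENNReal.ofReal ε ∧ r = ∫ x, hfun v t x ∂μ} := by
  have hNR : (0 : ℝ) < N := by positivity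
  set a := ENNReal.ofReal ((1 - δ) / N) with ha
  set b := ENNReal.ofReal (δ / N) with hb
  have h1' : 0 ≤ 1 - δ := by linarith
  have hab : a + b = (N : ℝ≥0∞)⁻¹ := by
    rw [ha, hb, ← ENNReal.ofReal_add (by positivity) (by positivity), ← add_div]
    simp only [sub_add_cancel]
    rw [one_div, ENNReal.ofReal_inv_of_pos hNR, ENNReal.ofReal_natCast]
  set μ : Measure (Fin n → ℝ) :=
    a • ∑ i, Measure.dirac (ξ i) + b • ∑ i, Measure.dirac (ξ i + w) with hμ
  set K : Measure ((Fin n → ℝ) × (Fin n → ℝ)) :=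
    a • ∑ i, Measure.dirac (ξ i, ξ i) + b • ∑ i, Measure.dirac (ξ i, ξ i + w) with hKdef
  have hNN : (N : ℝ≥0∞)⁻¹ * N = 1 :=
    ENNReal.inv_mul_cancel (by simp; omega) (by simp)
  have hprobμ : IsProbabilityMeasure μ := ⟨by
    simp [hμ, ← add_mul, hab, hNN]⟩
  have hprobK : IsProbabilityMeasure K := ⟨by
    simp [hKdef, ← add_mul, hab, hNN]⟩
  have hint : ∀ f : (Fin n → ℝ) → ℝ, Measurable f →
      Integrable f (a • ∑ i, Measure.dirac (ξ i)) ∧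
      Integrable f (b • ∑ i, Measure.dirac (ξ i + w)) := by
    intro f hf
    constructor <;>
    · refine Integrable.smul_measure ?_ ENNReal.ofReal_ne_top
      rw [integrable_finsetSum_measure]
      intro i _
      exact integrable_dirac (by simp)
  refine ⟨μ, hprobμ, ?_, ?_, ?_⟩
  · obtain ⟨i1, i2⟩ := hint _ (lpNorm_meas p)
    exact i1.add_measure i2
  · have m1 : K.map Prod.fst = empirical N ξ := by
      rw [hKdef, Measure.map_add _ _ measurable_fst, Measure.map_smul, Measure.map_smul,
        Measure.map_finset_sum measurable_fst.aemeasurable,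
        Measure.map_finset_sum measurable_fst.aemeasurable]
      simp only [Measure.map_dirac' measurable_fst]
      rw [← add_smul, hab]; rfl
    have m2 : K.map Prod.snd = μ := by
      rw [hKdef, Measure.map_add _ _ measurable_snd, Measure.map_smul, Measure.map_smul,
        Measure.map_finset_sum measurable_snd.aemeasurable,
        Measure.map_finset_sum measurable_snd.aemeasurable]
      simp only [Measure.map_dirac' measurable_snd]
      rfl
    unfold dW
    refine (iInf_le_of_le K <| iInf_le_of_le hprobK <| iInf_le_of_le m1 <| iInf_le_of_le m2 le_rfl).trans ?_
    have hneg : lpNorm p (-w) = lpNorm p w := by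
      have := lpNorm_smul' p hp0 (-1) w
      simpa using this
    rw [hKdef, lintegral_add_measure, lintegral_smul_measure, lintegral_smul_measure,
      lintegral_finsetSum_measure, lintegral_finsetSum_measure]
    simp only [lintegral_dirac, sub_self, lpNorm_zero' hp0, sub_add_cancel_left, hneg]
    simp only [ENNReal.ofReal_zero, Finset.sum_const_zero, mul_zero, zero_add, Finset.sum_const,
      Finset.card_univ, Fintype.card_fin, nsmul_eq_mul, smul_eq_mul]
    rw [hb, ← ENNReal.ofReal_natCast, ← ENNReal.ofReal_mul hNR.le,
      ← ENNReal.ofReal_mul (by positivity)]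
    apply ENNReal.ofReal_le_ofReal
    rw [← mul_assoc, div_mul_cancel₀ _ hNR.ne']
    exact hw
  · obtain ⟨i1, i2⟩ := hint _ (hfun_cont v t).measurable
    rw [hμ, integral_add_measure i1 i2, integral_smul_measure, integral_smul_measure,
      integral_finsetSum_measure (fun i _ => integrable_dirac (by simp)),
      integral_finsetSum_measure (fun i _ => integrable_dirac (by simp))]
    simp only [integral_dirac, smul_eq_mul, ha, hb]
    rw [ENNReal.toReal_ofReal (by positivity), ENNReal.toReal_ofReal (by positivity)]

theorem Wobj_le {n : ℕ} {p q : ℝ≥0∞} (hpq : 1 / p + 1 / q = 1) (α : ℝ) (hα : 0 < α)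
    (ε : ℝ) (hε : 0 ≤ ε)
    (N : ℕ) (hN : 1 ≤ N) (ξ : Fin N → Fin n → ℝ) (v : Fin n → ℝ) (t : ℝ) :
    Wobj p α ε N ξ v t ≤
      t + (1 / α) * ((1 / (N : ℝ)) * ∑ i, hfun v t (ξ i) + lpNorm q v * ε) := by
  unfold Wobj
  gcongr
  refine csSup_le ⟨_, lower_mem ε N hN ξ v t (aux_pos hpq).1 0 le_rfl zero_le_one 0 (by simpa)⟩ ?_
  rintro r ⟨μ, -, -, hd, rfl⟩
  exact upper hpq ε hε N hN ξ v t μ hd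

theorem le_Wobj {n : ℕ} {p q : ℝ≥0∞} (hpq : 1 / p + 1 / q = 1) (α : ℝ) (hα : 0 < α)
    (ε : ℝ) (hε : 0 ≤ ε)
    (N : ℕ) (hN : 1 ≤ N) (ξ : Fin N → Fin n → ℝ) (v : Fin n → ℝ)
    (hv : ∀ i, v i = 0 ∨ v i = 1) (t : ℝ) :
    t + (1 / α) * ((1 / (N : ℝ)) * ∑ i, hfun v t (ξ i) + lpNorm q v * ε) ≤
      Wobj p α ε N ξ v t := by
  have hNR : (0 : ℝ) < N := by positivity
  unfold Wobj
  gcongr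
  obtain ⟨u, hu1, hu2⟩ := dual_vec hpq v hv
  have hp0 := (aux_pos hpq).1
  set S := sSup {r : ℝ | ∃ μ : MeasureTheory.Measure (Fin n → ℝ),
    MeasureTheory.IsProbabilityMeasure μ ∧
    MeasureTheory.Integrable (fun x => lpNorm p x) μ ∧
    dW p (empirical N ξ) μ ≤ ENNReal.ofReal ε ∧ r = ∫ x, hfun v t x ∂μ} with hS
  set A := (1 / (N : ℝ)) * ∑ i, hfun v t (ξ i) with hA
  set B := (1 / (N : ℝ)) * ∑ i, (ip (ξ i) v - t) with hB
  have key : ∀ δ : ℝ, 0 < δ → δ ≤ 1 → (1 - δ) * A + δ * B + lpNorm q v * ε ≤ S := by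
    intro δ h0 h1
    have hm := lower_mem (p := p) ε N hN ξ v t hp0 δ h0.le h1 ((ε / δ) • u) (by
      rw [lpNorm_smul' p hp0, abs_of_nonneg (by positivity), ← mul_assoc,
        mul_div_cancel₀ _ h0.ne']
      nlinarith)
    have hle := le_csSup (by
      refine ⟨A + lpNorm q v * ε, ?_⟩
      rintro r ⟨μ, -, -, hd, rfl⟩
      exact upper hpq ε hε N hN ξ v t μ hd) hm
    refine le_trans ?_ hle
    have h2 : ∑ i, (ip (ξ i) v - t) + N * (ε / δ * lpNorm q v)
        ≤ ∑ i, hfun v t (ξ i + (ε / δ) • u) := by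
      have : (N : ℝ) * (ε / δ * lpNorm q v) = ∑ i : Fin N, (ε / δ * lpNorm q v) := by simp
      rw [this, ← Finset.sum_add_distrib]
      refine Finset.sum_le_sum fun i _ => ?_
      refine le_trans (le_of_eq ?_) (le_max_left _ _)
      rw [ip_add_left', ip_smul_left', hu2]; ring
    have h3 := mul_le_mul_of_nonneg_left h2 (show 0 ≤ δ / N by positivity)
    have h4 : δ / N * (∑ i, (ip (ξ i) v - t) + N * (ε / δ * lpNorm q v))
        = δ * B + lpNorm q v * ε := by
      rw [hB]; field_simp
    have h5 : (1 - δ) / N * ∑ i, hfun v t (ξ i) = (1 - δ) * A := by rw [hA]; ring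
    linarith
  have ht : Tendsto (fun δ : ℝ => (1 - δ) * A + δ * B + lpNorm q v * ε) (𝓝[>] 0)
      (𝓝 (A + lpNorm q v * ε)) := by
    have : Continuous (fun δ : ℝ => (1 - δ) * A + δ * B + lpNorm q v * ε) := by fun_prop
    have h := this.tendsto 0
    simp only [sub_zero, one_mul, zero_mul, add_zero] at h
    exact h.mono_left nhdsWithin_le_nhds
  refine le_of_tendsto ht ?_
  filter_upwards [Ioc_mem_nhdsGT (zero_lt_one (α := ℝ))] with δ hδ
  exact key δ hδ.1 hδ.2

/-- Corollary 1, DR bi-criteria shortest path via scalarization: any optimal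
solution `(p̄,t̄,s̄,λ̄)` of the scalarized convex program yields a weakly robust efficient pair
`(p̄,t̄)` of the DR bi-criteria shortest path problem. -/
theorem stmt17 (n : ℕ) (hn : 1 ≤ n) (p q : ℝ≥0∞) (hp : 1 ≤ p) (hpq : 1 / p + 1 / q = 1)
    (c : Fin n → ℝ) (α : ℝ) (hα : 0 < α) (hα1 : α ≤ 1) (ε : ℝ) (hε : 0 ≤ ε)
    (N : ℕ) (hN : 1 ≤ N) (ξ : Fin N → Fin n → ℝ)
    (P : Set (Fin n → ℝ)) (hPne : P.Nonempty) (hP01 : ∀ v ∈ P, ∀ i, v i = 0 ∨ v i = 1)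
    (l₁ l₂ : ℝ) (hl₁ : 0 ≤ l₁) (hl₂ : 0 ≤ l₂) (hl : l₁ + l₂ ≠ 0)
    (pbar : Fin n → ℝ) (tbar : ℝ) (sbar : Fin N → ℝ) (lambar : ℝ)
    (hbar_mem : pbar ∈ P)
    (hbar_feas : (∀ i, ip pbar (ξ i) - tbar ≤ sbar i ∧ 0 ≤ sbar i) ∧ lpNorm q pbar ≤ lambar)
    (hbar_min : ∀ (pp : Fin n → ℝ) (t : ℝ) (s : Fin N → ℝ) (lam : ℝ),
      pp ∈ P → (∀ i, ip pp (ξ i) - t ≤ s i ∧ 0 ≤ s i) → lpNorm q pp ≤ lam →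
      l₁ * ip c pbar + l₂ * (tbar + (1 / α) * ((1 / (N : ℝ)) * ∑ i, sbar i + lambar * ε)) ≤
        l₁ * ip c pp + l₂ * (t + (1 / α) * ((1 / (N : ℝ)) * ∑ i, s i + lam * ε))) :
    ∀ pp ∈ P, ∀ t : ℝ,
      l₁ * ip c pbar + l₂ * Wobj p α ε N ξ pbar tbar ≤
        l₁ * ip c pp + l₂ * Wobj p α ε N ξ pp t := by
  have hNR : (0 : ℝ) < N := by positivity
  intro pp hpp t
  have h1 := Wobj_le hpq α hα ε hε N hN ξ pbar tbar
  have h2 := le_Wobj hpq α hα ε hε N hN ξ pp (hP01 pp hpp) t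
  have h3 := hbar_min pp t (fun i => hfun pp t (ξ i)) (lpNorm q pp) hpp
    (fun i => ⟨by rw [ip_comm']; exact le_max_left _ _, hfun_nonneg' _ _ _⟩) le_rfl
  have h4 : tbar + (1 / α) * ((1 / (N : ℝ)) * ∑ i, hfun pbar tbar (ξ i) + lpNorm q pbar * ε) ≤
      tbar + (1 / α) * ((1 / (N : ℝ)) * ∑ i, sbar i + lambar * ε) := by
    gcongr with i
    · refine max_le ?_ (hbar_feas.1 i).2
      rw [ip_comm']; exact (hbar_feas.1 i).1
    · exact hbar_feas.2
  have h5 := mul_le_mul_of_nonneg_left (h1.trans h4) hl₂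
  have h6 := mul_le_mul_of_nonneg_left h2 hl₂
  linarith
end
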